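/- Let U : B₁ ⊗ Q₁ → F ⊗ Q₂ be unitary and let τ be the pure state on S ⊗ B̄₁ ⊗ F ⊗ Q₂ obtained by applying (id_S ⊗ U ⊗ id_{B̄₁}) to |ψ⟩_{S Q₁} ⊗ |φ⁺⟩_{B₁ B̄₁}, where |ψ⟩ is any pure state on S ⊗ Q₁ and |φ⁺⟩ is the maximally entangled state on B₁ ⊗ B̄₁. Then H(S B̄₁ F)_τ − H(S)_τ ≥ log₂(dim(B₁)/dim(F)), where H denotes the von Neumann entropy of the corresponding reduced state of τ. -/

import Mathlib

open Matrix
open scoped ComplexOrder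

/-- Matrix base-2 logarithm of a Hermitian matrix, via spectral decomposition
(junk value `0` on non-Hermitian input). -/
noncomputable def mlog2 {n : Type*} [Fintype n] [DecidableEq n]
    (A : Matrix n n ℂ) : Matrix n n ℂ :=
  if hA : A.IsHermitian then
    (hA.eigenvectorUnitary : Matrix n n ℂ) *
      Matrix.diagonal (fun i => (Real.logb 2 (hA.eigenvalues i) : ℂ)) *
      star (hA.eigenvectorUnitary : Matrix n n ℂ)
  else 0

/-- Von Neumann entropy (base 2): `H(ρ) = -Tr[ρ log₂ ρ]`. -/
noncomputable def vnEntropy {n : Type*} [Fintype n] [DecidableEq n]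
    (ρ : Matrix n n ℂ) : ℝ :=
  -(ρ * mlog2 ρ).trace.re

/-! Write `ψ` as a matrix `A : S → Q₁`, so that `η = A Aᴴ` is its marginal on `Q₁`. Tracing `F` out
of `U (ω ⊗ η) Uᴴ`, with `ω` the maximally mixed state on `B₁`, gives a channel `Λ` whose Kraus
operators are the blocks of `U` scaled by `1/√dim B₁`, and `B̄₁ ⊗ F` is its environment. The two
marginals of a pure state have the same entropy, so `H(S) = H(η)` and `H(S B̄₁ F) = H(Q₂) = H(Λ η)`.

What remains is the entropy gain of `Λ`. In eigenbases of `η` and `Λ η`, the channel acts on the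
eigenvalues by a nonnegative matrix whose columns sum to one and, because
`Λ(1) ≤ (dim F / dim B₁) • 1`, whose rows sum to at most `dim F / dim B₁`; Jensen's inequality for
`x ↦ -x log x` along each row gives the bound. -/

section Shannon

open Real

variable {m n : Type*} [Fintype m] [Fintype n]

lemma sum_mul_negMulLog_sub_le_negMulLog_sum {w p : n → ℝ} (hw : ∀ i, 0 ≤ w i)
    (hp : ∀ i, 0 ≤ p i) :
    ∑ i, w i * negMulLog (p i) - (∑ i, w i * p i) * log (∑ i, w i) ≤
      negMulLog (∑ i, w i * p i) := by
  rcases (Finset.sum_nonneg fun i _ => hw i).eq_or_lt with hW | hW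
  · have hw0 : w = 0 := by
      simpa using (Fintype.sum_eq_zero_iff_of_nonneg hw).1 hW.symm
    simp [hw0]
  · have jensen := concaveOn_negMulLog.le_map_centerMass (fun i _ => hw i) hW fun i _ => hp i
    simp only [Finset.centerMass, smul_eq_mul, Function.comp_apply] at jensen
    have hlog : negMulLog (∑ i, w i)⁻¹ = (∑ i, w i)⁻¹ * log (∑ i, w i) := by
      simp [negMulLog]
    rw [negMulLog_mul, hlog, mul_left_comm, ← mul_add, mul_le_mul_iff_right₀ (inv_pos.2 hW)]
      at jensen
    linarith

lemma sum_negMulLog_sub_le_sum_negMulLog_mulVec {T : Matrix m n ℝ} {c : ℝ}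
    (hT : ∀ j i, 0 ≤ T j i) (hcol : ∀ i, ∑ j, T j i = 1) (hrow : ∀ j, ∑ i, T j i ≤ c)
    {p : n → ℝ} (hp : ∀ i, 0 ≤ p i) :
    ∑ i, negMulLog (p i) - (∑ i, p i) * log c ≤ ∑ j, negMulLog ((T *ᵥ p) j) := by
  have hlog (j : m) : (T *ᵥ p) j * log (∑ i, T j i) ≤ (T *ᵥ p) j * log c := by
    rcases (Finset.sum_nonneg fun i _ => hT j i).eq_or_lt with hr | hr
    · have hT0 : T j = 0 := by
        simpa using (Fintype.sum_eq_zero_iff_of_nonneg (hT j)).1 hr.symm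
      simp [mulVec, dotProduct, hT0]
    · exact mul_le_mul_of_nonneg_left (log_le_log hr (hrow j))
        (Finset.sum_nonneg fun i _ => mul_nonneg (hT j i) (hp i))
  have hmass (g : n → ℝ) : ∑ j, ∑ i, T j i * g i = ∑ i, g i := by
    rw [Finset.sum_comm]
    simp [← Finset.sum_mul, hcol]
  calc ∑ i, negMulLog (p i) - (∑ i, p i) * log c
      = ∑ j, (∑ i, T j i * negMulLog (p i) - (T *ᵥ p) j * log c) := by
        simp only [Finset.sum_sub_distrib, ← Finset.sum_mul, mulVec, dotProduct, hmass]
    _ ≤ ∑ j, (∑ i, T j i * negMulLog (p i) - (T *ᵥ p) j * log (∑ i, T j i)) :=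
        Finset.sum_le_sum fun j _ => sub_le_sub_left (hlog j) _
    _ ≤ ∑ j, negMulLog ((T *ᵥ p) j) :=
        Finset.sum_le_sum fun j _ => sum_mul_negMulLog_sub_le_negMulLog_sum (hT j) hp

end Shannon

section Entropy

variable {m n : Type*} [Fintype m] [DecidableEq m] [Fintype n] [DecidableEq n]

lemma vnEntropy_eq_sum_eigenvalues {A : Matrix n n ℂ} (hA : A.IsHermitian) :
    vnEntropy A = (∑ i, Real.negMulLog (hA.eigenvalues i)) / Real.log 2 := by
  set Φ := Unitary.conjStarAlgAut ℂ (Matrix n n ℂ) hA.eigenvectorUnitary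
  set d : n → ℂ := fun i => (hA.eigenvalues i : ℂ)
  set l : n → ℂ := fun i => (Real.logb 2 (hA.eigenvalues i) : ℂ)
  have htrace : (A * mlog2 A).trace = ∑ i, d i * l i := by
    calc (A * mlog2 A).trace = (Φ (diagonal d) * Φ (diagonal l)).trace := by
          rw [mlog2, dif_pos hA]
          congr 2
          exact hA.spectral_theorem
      _ = (diagonal d * diagonal l).trace := by
          rw [← map_mul, Unitary.conjStarAlgAut_apply, trace_mul_cycle, Unitary.coe_star_mul_self,
            Matrix.one_mul]
      _ = ∑ i, d i * l i := by rw [diagonal_mul_diagonal, trace_diagonal]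
  rw [vnEntropy, htrace, Complex.re_sum, ← Finset.sum_neg_distrib, Finset.sum_div]
  refine Finset.sum_congr rfl fun i _ => ?_
  rw [← Complex.ofReal_mul, Complex.ofReal_re, Real.negMulLog, Real.logb, neg_mul, neg_div,
    mul_div_assoc]

lemma vnEntropy_eq_sum_roots_charpoly {A : Matrix n n ℂ} (hA : A.IsHermitian) :
    vnEntropy A = (A.charpoly.roots.map fun z => Real.negMulLog z.re).sum / Real.log 2 := by
  rw [vnEntropy_eq_sum_eigenvalues hA, hA.roots_charpoly_eq_eigenvalues, Multiset.map_map]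
  rfl

lemma vnEntropy_transpose {A : Matrix n n ℂ} (hA : A.IsHermitian) :
    vnEntropy Aᵀ = vnEntropy A := by
  rw [vnEntropy_eq_sum_roots_charpoly hA, vnEntropy_eq_sum_roots_charpoly hA.transpose,
    charpoly_transpose]

open Polynomial in
lemma vnEntropy_mul_comm {A : Matrix m n ℂ} {B : Matrix n m ℂ} (hAB : (A * B).IsHermitian)
    (hBA : (B * A).IsHermitian) : vnEntropy (A * B) = vnEntropy (B * A) := by
  have hroots : Fintype.card n • {0} + (A * B).charpoly.roots =
      Fintype.card m • {0} + (B * A).charpoly.roots := by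
    have h := congrArg roots (charpoly_mul_comm' A B)
    rwa [roots_mul (((monic_X_pow _).mul (charpoly_monic _)).ne_zero),
      roots_mul (((monic_X_pow _).mul (charpoly_monic _)).ne_zero), roots_X_pow, roots_X_pow] at h
  have hsum := congrArg (fun s => (s.map fun z : ℂ => Real.negMulLog z.re).sum) hroots
  simp only [Multiset.map_add, Multiset.sum_add, Multiset.map_nsmul, Multiset.sum_nsmul,
    Multiset.map_singleton, Multiset.sum_singleton, Complex.zero_re, Real.negMulLog_zero,
    smul_zero, zero_add] at hsum
  rw [vnEntropy_eq_sum_roots_charpoly hAB, vnEntropy_eq_sum_roots_charpoly hBA, hsum]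

/-- `A * Aᴴ` and `Aᵀ * Aᵀᴴ` are the two marginals of the pure state with coefficients `A`. -/
lemma vnEntropy_transpose_mul_conjTranspose (A : Matrix m n ℂ) :
    vnEntropy (Aᵀ * Aᵀᴴ) = vnEntropy (A * Aᴴ) := by
  have h : Aᵀ * Aᵀᴴ = (Aᴴ * A)ᵀ := by
    rw [transpose_mul]; rfl
  rw [h, vnEntropy_transpose (isHermitian_conjTranspose_mul_self A),
    vnEntropy_mul_comm (isHermitian_conjTranspose_mul_self A)
      (isHermitian_mul_conjTranspose_self A)]

end Entropy

section Kraus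

open scoped MatrixOrder

variable {κ m n s : Type*} [Fintype κ]

/-- The completely positive map `ρ ↦ ∑ₖ Kₖ ρ Kₖᴴ` with Kraus operators `K`. Its adjoint has Kraus
operators `Kₖᴴ`, so it is trace preserving when `krausMap (fun k => (K k)ᴴ) 1 = 1`. -/
def krausMap [Fintype n] (K : κ → Matrix m n ℂ) (ρ : Matrix n n ℂ) : Matrix m m ℂ :=
  ∑ k, K k * ρ * (K k)ᴴ

/-- The matrix by which `krausMap K` acts on diagonals: its entry at `(j, i)` is the transition
weight from the `i`-th input basis state to the `j`-th output basis state. -/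
def transitionMatrix (K : κ → Matrix m n ℂ) : Matrix m n ℝ :=
  of fun j i => ∑ k, Complex.normSq (K k j i)

lemma krausMap_diagonal_apply_self [Fintype n] [DecidableEq n] (K : κ → Matrix m n ℂ)
    (p : n → ℝ) (j : m) :
    krausMap K (diagonal fun i => (p i : ℂ)) j j = ((transitionMatrix K *ᵥ p) j : ℝ) := by
  simp only [krausMap, Matrix.sum_apply, Matrix.mul_apply (M := _ * diagonal _), mul_diagonal,
    conjTranspose_apply, transitionMatrix, mulVec, dotProduct, of_apply, Finset.sum_mul,
    RCLike.star_def]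
  push_cast [← Complex.mul_conj]
  rw [Finset.sum_comm]
  exact Finset.sum_congr rfl fun i _ => Finset.sum_congr rfl fun k _ => by ring

lemma sum_transitionMatrix_row [Fintype n] [DecidableEq n] (K : κ → Matrix m n ℂ) (j : m) :
    ((∑ i, transitionMatrix K j i : ℝ) : ℂ) = krausMap K 1 j j := by
  simpa [mulVec, dotProduct] using (krausMap_diagonal_apply_self K (fun _ => 1) j).symm

lemma sum_transitionMatrix_col [Fintype m] [DecidableEq m] (K : κ → Matrix m n ℂ) (i : n) :
    ((∑ j, transitionMatrix K j i : ℝ) : ℂ) = krausMap (fun k => (K k)ᴴ) 1 i i := by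
  rw [← sum_transitionMatrix_row]
  simp [transitionMatrix]

lemma krausMap_smul [Fintype n] (r : ℝ) (K : κ → Matrix m n ℂ) (ρ : Matrix n n ℂ) :
    krausMap (fun k => r • K k) ρ = r ^ 2 • krausMap K ρ := by
  simp [krausMap, Finset.smul_sum, smul_smul, sq]

lemma krausMap_mul_mul [Fintype m] [Fintype n] {m' n' : Type*} [Fintype n'] (G : Matrix m' m ℂ)
    (K : κ → Matrix m n ℂ) (E : Matrix n n' ℂ) (ρ : Matrix n' n' ℂ) :
    krausMap (fun k => G * K k * E) ρ = G * krausMap K (E * ρ * Eᴴ) * Gᴴ := by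
  simp [krausMap, Matrix.mul_sum, Matrix.sum_mul, Matrix.mul_assoc]

lemma sum_negMulLog_sub_le_of_krausMap_diagonal [Fintype m] [DecidableEq m] [Fintype n]
    [DecidableEq n] {K : κ → Matrix m n ℂ} {c : ℝ} (htp : krausMap (fun k => (K k)ᴴ) 1 = 1)
    (hc : krausMap K 1 ≤ c • 1) {p : n → ℝ} (hp : ∀ i, 0 ≤ p i) {q : m → ℝ}
    (hpq : krausMap K (diagonal fun i => (p i : ℂ)) = diagonal fun j => (q j : ℂ)) :
    ∑ i, Real.negMulLog (p i) - (∑ i, p i) * Real.log c ≤ ∑ j, Real.negMulLog (q j) := by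
  have hnonneg (j : m) (i : n) : 0 ≤ transitionMatrix K j i :=
    Finset.sum_nonneg fun k _ => Complex.normSq_nonneg _
  have hcol (i : n) : ∑ j, transitionMatrix K j i = 1 := by
    have h := sum_transitionMatrix_col K i
    rw [htp, one_apply_eq] at h
    exact_mod_cast h
  have hrow (j : m) : ∑ i, transitionMatrix K j i ≤ c := by
    have h := (Matrix.le_iff.1 hc).diag_nonneg (i := j)
    rw [Matrix.sub_apply, ← sum_transitionMatrix_row, Matrix.smul_apply, one_apply_eq, sub_nonneg,
      Complex.real_smul, mul_one] at h
    exact_mod_cast h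
  have hq (j : m) : (transitionMatrix K *ᵥ p) j = q j := by
    have h := krausMap_diagonal_apply_self K p j
    rw [hpq, diagonal_apply_eq] at h
    exact_mod_cast h.symm
  simpa only [hq] using sum_negMulLog_sub_le_sum_negMulLog_mulVec hnonneg hcol hrow hp

theorem vnEntropy_sub_le_vnEntropy_krausMap [Fintype m] [DecidableEq m] [Fintype n] [DecidableEq n]
    {K : κ → Matrix m n ℂ} {c : ℝ} (htp : krausMap (fun k => (K k)ᴴ) 1 = 1)
    (hc : krausMap K 1 ≤ c • 1) {ρ : Matrix n n ℂ} (hρ : ρ.PosSemidef) :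
    vnEntropy ρ - ρ.trace.re * Real.logb 2 c ≤ vnEntropy (krausMap K ρ) := by
  have hσ : (krausMap K ρ).IsHermitian :=
    (posSemidef_sum _ fun k _ => hρ.mul_mul_conjTranspose_same (K k)).isHermitian
  have hρ' := hρ.isHermitian
  set E : Matrix n n ℂ := ↑hρ'.eigenvectorUnitary
  set G : Matrix m m ℂ := ↑hσ.eigenvectorUnitary
  have hE : Eᴴ * E = 1 := Unitary.coe_star_mul_self hρ'.eigenvectorUnitary
  have hE' : E * Eᴴ = 1 := Unitary.coe_mul_star_self hρ'.eigenvectorUnitary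
  have hG : Gᴴ * G = 1 := Unitary.coe_star_mul_self hσ.eigenvectorUnitary
  have hG' : G * Gᴴ = 1 := Unitary.coe_mul_star_self hσ.eigenvectorUnitary
  have htpW : krausMap (fun k => (Gᴴ * K k * E)ᴴ) 1 = 1 := by
    simp only [conjTranspose_mul, conjTranspose_conjTranspose, ← Matrix.mul_assoc]
    rw [krausMap_mul_mul, Matrix.mul_one, hG', htp, Matrix.mul_one, conjTranspose_conjTranspose, hE]
  have hcW : krausMap (fun k => Gᴴ * K k * E) 1 ≤ c • 1 := by
    have h := (Matrix.le_iff.1 hc).conjTranspose_mul_mul_same G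
    rw [Matrix.le_iff, krausMap_mul_mul, Matrix.mul_one, hE', conjTranspose_conjTranspose]
    simpa [Matrix.mul_sub, Matrix.sub_mul, hG] using h
  have hdiag : krausMap (fun k => Gᴴ * K k * E) (diagonal fun i => (hρ'.eigenvalues i : ℂ)) =
      diagonal fun j => (hσ.eigenvalues j : ℂ) := by
    rw [krausMap_mul_mul, conjTranspose_conjTranspose]
    have hspec : E * (diagonal fun i => (hρ'.eigenvalues i : ℂ)) * Eᴴ = ρ :=
      hρ'.spectral_theorem.symm
    rw [hspec]
    exact (Unitary.conjStarAlgAut_star_apply _ _).symm.trans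
      hσ.conjStarAlgAut_star_eigenvectorUnitary
  have hmain := sum_negMulLog_sub_le_of_krausMap_diagonal htpW hcW hρ.eigenvalues_nonneg hdiag
  have htrace : ρ.trace.re = ∑ i, hρ'.eigenvalues i := by
    simp [hρ'.trace_eq_sum_eigenvalues]
  rw [vnEntropy_eq_sum_eigenvalues hρ', vnEntropy_eq_sum_eigenvalues hσ, htrace, Real.logb,
    ← mul_div_assoc, ← sub_div]
  exact div_le_div_of_nonneg_right hmain (Real.log_nonneg one_le_two)

/-- Coefficients of the pure state that the Stinespring isometry of `krausMap K` produces from the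
pure state with coefficients `A : n → s`; the index `(a, k) : s × κ` collects the purifying system
`s` and the environment `κ`. -/
def krausDilation [Fintype n] (K : κ → Matrix m n ℂ) (A : Matrix n s ℂ) : Matrix m (s × κ) ℂ :=
  of fun x p => (K p.2 * A) x p.1

lemma krausDilation_mul_conjTranspose [Fintype n] [Fintype s] (K : κ → Matrix m n ℂ)
    (A : Matrix n s ℂ) :
    krausDilation K A * (krausDilation K A)ᴴ = krausMap K (A * Aᴴ) := by
  have h (k : κ) : K k * (A * Aᴴ) * (K k)ᴴ = K k * A * (K k * A)ᴴ := by
    simp [Matrix.mul_assoc]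
  ext x y
  simp only [krausMap, h, krausDilation, Matrix.sum_apply, Matrix.mul_apply (N := _ᴴ),
    conjTranspose_apply, of_apply, Fintype.sum_prod_type_right]

lemma sum_krausDilation_mul_star [Fintype m] [DecidableEq m] [Fintype n] [DecidableEq n]
    {K : κ → Matrix m n ℂ} (htp : krausMap (fun k => (K k)ᴴ) 1 = 1) (A : Matrix n s ℂ) (a a' : s) :
    ∑ k, ∑ x, krausDilation K A x (a, k) * star (krausDilation K A x (a', k)) =
      (Aᵀ * Aᵀᴴ) a a' := by
  have h : Aᴴ * A = ∑ k, (K k * A)ᴴ * (K k * A) := by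
    calc Aᴴ * A = Aᴴ * krausMap (fun k => (K k)ᴴ) 1 * A := by rw [htp, Matrix.mul_one]
      _ = ∑ k, (K k * A)ᴴ * (K k * A) := by
          simp [krausMap, Matrix.mul_sum, Matrix.sum_mul, Matrix.mul_assoc]
  have h' : (Aᵀ * Aᵀᴴ) a a' = (Aᴴ * A) a' a := by
    simp [Matrix.mul_apply, mul_comm]
  rw [h', h]
  simp only [krausDilation, of_apply, Matrix.sum_apply, Matrix.mul_apply (M := (_ * _)ᴴ),
    conjTranspose_apply, mul_comm]

theorem vnEntropy_sub_le_vnEntropy_krausDilation [Fintype m] [DecidableEq m] [Fintype n]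
    [DecidableEq n] [Fintype s] [DecidableEq s] [DecidableEq κ] {K : κ → Matrix m n ℂ} {c : ℝ}
    (htp : krausMap (fun k => (K k)ᴴ) 1 = 1) (hc : krausMap K 1 ≤ c • 1) (A : Matrix n s ℂ) :
    vnEntropy (Aᵀ * Aᵀᴴ) - (A * Aᴴ).trace.re * Real.logb 2 c ≤
      vnEntropy ((krausDilation K A)ᵀ * (krausDilation K A)ᵀᴴ) := by
  rw [vnEntropy_transpose_mul_conjTranspose, vnEntropy_transpose_mul_conjTranspose,
    krausDilation_mul_conjTranspose]
  exact vnEntropy_sub_le_vnEntropy_krausMap htp hc (posSemidef_self_mul_conjTranspose A)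

end Kraus

section Isometry

open scoped MatrixOrder

variable {B F Q₁ Q₂ : Type*} [Fintype B]

/-- Kraus operators of the channel `ρ ↦ Tr_F[U (ω ⊗ ρ) Uᴴ]`, where `ω` is the maximally mixed state
on `B`: the blocks `⟨φ| U |β⟩` divided by `√dim B`, indexed by `(β, φ)`. -/
noncomputable def blockKraus (U : Matrix (F × Q₂) (B × Q₁) ℂ) : B × F → Matrix Q₂ Q₁ ℂ :=
  fun k => (√(Fintype.card B))⁻¹ • U.submatrix (k.2, ·) (k.1, ·)

lemma sum_submatrix_mul_conjTranspose [Fintype Q₁] (U : Matrix (F × Q₂) (B × Q₁) ℂ) (φ : F) :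
    ∑ β, U.submatrix (φ, ·) (β, ·) * (U.submatrix (φ, ·) (β, ·))ᴴ =
      (U * Uᴴ).submatrix (φ, ·) (φ, ·) := by
  ext x x'
  simp [Matrix.sum_apply, Matrix.mul_apply, Fintype.sum_prod_type]

lemma krausMap_blockKraus_one [Fintype F] [Fintype Q₁] [DecidableEq Q₁]
    (U : Matrix (F × Q₂) (B × Q₁) ℂ) :
    krausMap (blockKraus U) 1 =
      (Fintype.card B : ℝ)⁻¹ • ∑ φ, (U * Uᴴ).submatrix (φ, ·) (φ, ·) := by
  unfold blockKraus
  rw [krausMap_smul, inv_pow, Real.sq_sqrt (Nat.cast_nonneg _)]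
  simp only [krausMap, Matrix.mul_one, Fintype.sum_prod_type_right,
    sum_submatrix_mul_conjTranspose]

lemma krausMap_conjTranspose_blockKraus_one [Fintype F] [Fintype Q₂] [DecidableEq Q₂]
    (U : Matrix (F × Q₂) (B × Q₁) ℂ) :
    krausMap (fun k => (blockKraus U k)ᴴ) 1 =
      (Fintype.card B : ℝ)⁻¹ • ∑ β, (Uᴴ * U).submatrix (β, ·) (β, ·) := by
  have hsum (β : B) := sum_submatrix_mul_conjTranspose Uᴴ β
  simp only [conjTranspose_conjTranspose, conjTranspose_submatrix] at hsum
  simp only [blockKraus, conjTranspose_smul, star_trivial]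
  rw [krausMap_smul, inv_pow, Real.sq_sqrt (Nat.cast_nonneg _)]
  simp only [krausMap, Matrix.mul_one, conjTranspose_submatrix, conjTranspose_conjTranspose,
    Fintype.sum_prod_type, hsum]

lemma krausMap_conjTranspose_blockKraus_one_eq_one [Nonempty B] [DecidableEq B] [Fintype F]
    [Fintype Q₂] [DecidableEq Q₂] [DecidableEq Q₁] {U : Matrix (F × Q₂) (B × Q₁) ℂ}
    (hU : Uᴴ * U = 1) : krausMap (fun k => (blockKraus U k)ᴴ) 1 = 1 := by
  have hone (β : B) : (1 : Matrix (B × Q₁) (B × Q₁) ℂ).submatrix (β, ·) (β, ·) = 1 :=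
    submatrix_one _ (Prod.mk_right_injective β)
  simp [krausMap_conjTranspose_blockKraus_one, hU, hone, ← Nat.cast_smul_eq_nsmul ℝ, smul_smul]

lemma mul_conjTranspose_le_one {m n : Type*} [Fintype m] [DecidableEq m] [Fintype n]
    [DecidableEq n] {U : Matrix m n ℂ} (hU : Uᴴ * U = 1) : U * Uᴴ ≤ 1 := by
  have hproj : IsStarProjection (U * Uᴴ) :=
    ⟨by rw [IsIdempotentElem, Matrix.mul_assoc, ← Matrix.mul_assoc Uᴴ, hU, Matrix.one_mul],
      isHermitian_mul_conjTranspose_self U⟩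
  exact hproj.le_one

lemma krausMap_blockKraus_one_le [DecidableEq B] [Fintype F] [Fintype Q₁] [DecidableEq Q₁]
    [Fintype Q₂] [DecidableEq Q₂] {U : Matrix (F × Q₂) (B × Q₁) ℂ} (hU : Uᴴ * U = 1) :
    krausMap (blockKraus U) 1 ≤ ((Fintype.card F : ℝ) / Fintype.card B) • 1 := by
  classical
  have hle (φ : F) : (U * Uᴴ).submatrix (φ, ·) (φ, ·) ≤ (1 : Matrix Q₂ Q₂ ℂ) := by
    rw [← submatrix_one _ (Prod.mk_right_injective φ)]
    exact (Matrix.le_iff.1 (mul_conjTranspose_le_one hU)).submatrix (φ, ·)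
  calc krausMap (blockKraus U) 1
      = (Fintype.card B : ℝ)⁻¹ • ∑ φ, (U * Uᴴ).submatrix (φ, ·) (φ, ·) :=
        krausMap_blockKraus_one U
    _ ≤ (Fintype.card B : ℝ)⁻¹ • ∑ _φ : F, (1 : Matrix Q₂ Q₂ ℂ) :=
        smul_le_smul_of_nonneg_left (Finset.sum_le_sum fun φ _ => hle φ) (by positivity)
    _ = ((Fintype.card F : ℝ) / Fintype.card B) • 1 := by
        simp [← Nat.cast_smul_eq_nsmul ℝ, smul_smul, div_eq_inv_mul]

end Isometry

theorem entropic_inequality_core_general {S B F Q₁ Q₂ : Type*} [Fintype S] [DecidableEq S]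
    [Fintype B] [DecidableEq B] [Nonempty B] [Fintype F] [DecidableEq F] [Fintype Q₁]
    [DecidableEq Q₁] [Fintype Q₂] (U : Matrix (F × Q₂) (B × Q₁) ℂ) (hU : Uᴴ * U = 1)
    (ψ : S × Q₁ → ℂ) (hψ : star ψ ⬝ᵥ ψ = 1)
    (v : S × B × F × Q₂ → ℂ)
    (hv : ∀ x : S × B × F × Q₂,
      v x = ∑ q : Q₁, ∑ β : B,
        ψ (x.1, q) * ((√(Fintype.card B))⁻¹ : ℂ) * (if β = x.2.1 then 1 else 0) *
          U (x.2.2.1, x.2.2.2) (β, q))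
    (τ : Matrix (S × B × F × Q₂) (S × B × F × Q₂) ℂ)
    (hτ : τ = vecMulVec v (star v)) :
    vnEntropy (of fun p p' : S × B × F =>
        ∑ x : Q₂, τ (p.1, p.2.1, p.2.2, x) (p'.1, p'.2.1, p'.2.2, x)) -
      vnEntropy (of fun a a' : S =>
        ∑ β : B, ∑ φ : F, ∑ x : Q₂, τ (a, β, φ, x) (a', β, φ, x)) ≥
      Real.logb 2 ((Fintype.card B : ℝ) / Fintype.card F) := by
  classical
  let A : Matrix Q₁ S ℂ := of fun q a => ψ (a, q)
  have hv' (p : S × B × F) (x : Q₂) :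
      v (p.1, p.2.1, p.2.2, x) = krausDilation (blockKraus U) A x p := by
    simp [hv, A, krausDilation, blockKraus, Matrix.mul_apply, mul_left_comm, mul_comm]
  have hSBF : (of fun p p' : S × B × F =>
      ∑ x : Q₂, τ (p.1, p.2.1, p.2.2, x) (p'.1, p'.2.1, p'.2.2, x)) =
      (krausDilation (blockKraus U) A)ᵀ * (krausDilation (blockKraus U) A)ᵀᴴ := by
    ext p p'
    simp [hτ, vecMulVec_apply, hv', Matrix.mul_apply]
  have hS : (of fun a a' : S => ∑ β : B, ∑ φ : F, ∑ x : Q₂, τ (a, β, φ, x) (a', β, φ, x)) =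
      Aᵀ * Aᵀᴴ := by
    ext a a'
    rw [← sum_krausDilation_mul_star (krausMap_conjTranspose_blockKraus_one_eq_one hU),
      Fintype.sum_prod_type]
    simp [hτ, vecMulVec_apply, ← hv']
  have htrace : (A * Aᴴ).trace = 1 := by
    rw [← hψ]
    simp [Matrix.trace, Matrix.mul_apply, dotProduct, A, Fintype.sum_prod_type_right, mul_comm]
  have hgain := vnEntropy_sub_le_vnEntropy_krausDilation
    (krausMap_conjTranspose_blockKraus_one_eq_one hU) (krausMap_blockKraus_one_le hU) A
  rw [htrace, Complex.one_re, one_mul, ← inv_div, Real.logb_inv] at hgain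
  rw [hSBF, hS]
  linarith

/-- core of Lemma 2 / Theorem 1: let `U : B₁ ⊗ Q₁ → F ⊗ Q₂` be unitary
and let `τ = |v⟩⟨v|` be the pure state on `S ⊗ B̄₁ ⊗ F ⊗ Q₂` obtained by applying
`id_S ⊗ U ⊗ id_{B̄₁}` to `|ψ⟩_{S Q₁} ⊗ |φ⁺⟩_{B₁ B̄₁}`, with `|ψ⟩` an arbitrary pure
state and `|φ⁺⟩` the maximally entangled state. Then
`H(S B̄₁ F)_τ − H(S)_τ ≥ log₂(dim B₁ / dim F)`. -/
theorem entropic_inequality_core (s b f q1 q2 : ℕ)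
    (hs : 0 < s) (hb : 0 < b) (hf : 0 < f) (hq1 : 0 < q1) (hq2 : 0 < q2)
    (U : Matrix (Fin f × Fin q2) (Fin b × Fin q1) ℂ)
    (hU1 : U * Uᴴ = 1) (hU2 : Uᴴ * U = 1)
    (ψ : Fin s × Fin q1 → ℂ) (hψ : star ψ ⬝ᵥ ψ = 1)
    (v : Fin s × Fin b × Fin f × Fin q2 → ℂ)
    (hv : ∀ x : Fin s × Fin b × Fin f × Fin q2,
      v x = ∑ q1' : Fin q1, ∑ b1 : Fin b,
        ψ (x.1, q1') * ((Real.sqrt b)⁻¹ : ℂ) * (if b1 = x.2.1 then 1 else 0) *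
          U (x.2.2.1, x.2.2.2) (b1, q1'))
    (τ : Matrix (Fin s × Fin b × Fin f × Fin q2) (Fin s × Fin b × Fin f × Fin q2) ℂ)
    (hτ : τ = Matrix.vecMulVec v (star v)) :
    vnEntropy (Matrix.of fun p q : Fin s × Fin b × Fin f =>
        ∑ x : Fin q2, τ (p.1, p.2.1, p.2.2, x) (q.1, q.2.1, q.2.2, x)) -
      vnEntropy (Matrix.of fun a a' : Fin s =>
        ∑ b1 : Fin b, ∑ x1 : Fin f, ∑ x2 : Fin q2,
          τ (a, b1, x1, x2) (a', b1, x1, x2)) ≥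
      Real.logb 2 ((b : ℝ) / (f : ℝ)) := by
  have : Nonempty (Fin b) := ⟨⟨0, hb⟩⟩
  simpa using entropic_inequality_core_general U hU2 ψ hψ v (by simpa using hv) τ hτ
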